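/- arXiv:2509.02303 — 5 statements merged into one kernel-verified Lean document; each statement's English description precedes it below -/
import Mathlib

section
/- Assume a_i + b_j ≠ 0 for all i, j, and let s_0 be a real number with s_0 − (n−n')/2 ∈ ℤ. Then the following are equivalent: (1) for all i, j, Γ(s_0 + |a_i + b_j|) ≠ 0 and Γ(1 − s_0 + |a_i + b_j|) ≠ 0 (where Γ is the complex Gamma function, extended by the value 0 at its poles, i.e. at the nonpositive integers, so this says the archimedean L-factors L(s, Π_∞ × Π'_∞) and L(1−s, Π_∞^∨ × Π'_∞^∨) are holomorphic at s_0); (2) −min_{i,j} |a_i + b_j| < s_0 ≤ min_{i,j} |a_i + b_j|. (This is the paper's explicit description of the set of critical points of L(s, Π × Π').) -/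
theorem gamma_ne_zero_iff_of_int (x : ℝ) (m : ℤ) (hx : x = m) :
    Complex.Gamma (x : ℂ) ≠ 0 ↔ 0 < m := by
  subst hx
  rw [Complex.Gamma_ofReal, Ne, Complex.ofReal_eq_zero, Real.Gamma_eq_zero_iff]
  constructor
  · intro h
    by_contra hm
    refine h ⟨(-m).toNat, ?_⟩
    have h1 : (((-m).toNat : ℤ)) = -m := Int.toNat_of_nonneg (by omega)
    have h2 : (((-m).toNat : ℝ)) = -(m : ℝ) := by exact_mod_cast h1
    rw [h2, neg_neg]
  · rintro hm ⟨k, hk⟩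
    have : m = -(k : ℤ) := by exact_mod_cast hk
    omega

/-- Explicit description of the critical points of a Rankin–Selberg L-function:
for half-integral infinity-type exponents `a_1 > ... > a_n` (in `ℤ + (n−1)/2`) and
`b_1 > ... > b_{n'}` (in `ℤ + (n'−1)/2`) with `a_i + b_j ≠ 0` for all `i, j`, and
for `s_0 ∈ (n−n')/2 + ℤ`, the archimedean L-factors — products of
`Γ(s_0 + |a_i + b_j|)` and `Γ(1 − s_0 + |a_i + b_j|)` — are holomorphic at `s_0`
(i.e., the complex Gamma function, which vanishes exactly at its poles, the
nonpositive integers, is nonzero at all these points) if and only if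
`−min_{i,j} |a_i + b_j| < s_0 ≤ min_{i,j} |a_i + b_j|` (expressed pointwise). -/
theorem critical_points_iff (n n' : ℕ) (hn : 1 ≤ n) (hn' : 1 ≤ n')
    (a b : ℕ → ℝ)
    (ha : ∀ i, 1 ≤ i → i < n → a (i + 1) < a i)
    (hb : ∀ j, 1 ≤ j → j < n' → b (j + 1) < b j)
    (haz : ∀ i ∈ Finset.Icc 1 n, ∃ k : ℤ, a i = (k : ℝ) + ((n : ℝ) - 1) / 2)
    (hbz : ∀ j ∈ Finset.Icc 1 n', ∃ k : ℤ, b j = (k : ℝ) + ((n' : ℝ) - 1) / 2)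
    (hab : ∀ i ∈ Finset.Icc 1 n, ∀ j ∈ Finset.Icc 1 n', a i + b j ≠ 0)
    (s₀ : ℝ) (hs : ∃ k : ℤ, s₀ - ((n : ℝ) - (n' : ℝ)) / 2 = (k : ℝ)) :
    (∀ i ∈ Finset.Icc 1 n, ∀ j ∈ Finset.Icc 1 n',
        Complex.Gamma ((s₀ + |a i + b j| : ℝ) : ℂ) ≠ 0 ∧
        Complex.Gamma ((1 - s₀ + |a i + b j| : ℝ) : ℂ) ≠ 0) ↔
    (∀ i ∈ Finset.Icc 1 n, ∀ j ∈ Finset.Icc 1 n',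
        -|a i + b j| < s₀ ∧ s₀ ≤ |a i + b j|) := by
  refine forall₂_congr fun i hi => forall₂_congr fun j hj => ?_
  obtain ⟨k, hk⟩ := haz i hi
  obtain ⟨l, hl⟩ := hbz j hj
  obtain ⟨m, hm⟩ := hs
  have key : ∃ p q : ℤ, s₀ + |a i + b j| = p ∧ s₀ - |a i + b j| = q := by
    have h1 : s₀ + (a i + b j) = ((m + k + l + n - 1 : ℤ) : ℝ) := by
      push_cast; linarith
    have h2 : s₀ - (a i + b j) = ((m - k - l - n' + 1 : ℤ) : ℝ) := by
      push_cast; linarith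
    rcases abs_choice (a i + b j) with h | h
    · exact ⟨_, _, by rw [h]; exact h1, by rw [h]; exact h2⟩
    · exact ⟨_, _, by rw [h, ← sub_eq_add_neg]; exact h2, by rw [h, sub_neg_eq_add]; exact h1⟩
  obtain ⟨p, q, hp, hq⟩ := key
  rw [gamma_ne_zero_iff_of_int _ p hp,
    gamma_ne_zero_iff_of_int _ (1 - q) (by push_cast; linarith)]
  have e1 : -|a i + b j| < s₀ ↔ 0 < p := by
    rw [← Int.cast_pos (R := ℝ), ← hp, neg_lt_iff_pos_add]
  have e2 : s₀ ≤ |a i + b j| ↔ 0 < 1 - q := by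
    rw [← sub_nonpos, hq, Int.cast_nonpos]; omega
  rw [e1, e2]
end

section
/- There exists a real number s_0 with s_0 − (n−n')/2 ∈ ℤ such that Γ(s_0 + |a_i + b_j|) ≠ 0 and Γ(1 − s_0 + |a_i + b_j|) ≠ 0 for all i, j, if and only if a_i + b_j ≠ 0 for all 1 ≤ i ≤ n and 1 ≤ j ≤ n'. (This is the paper's criterion: the Rankin–Selberg L-function L(s, Π × Π') has critical points if and only if a_{v,i} + b_{v,j} ≠ 0 for all i and j.) -/
/-- The Rankin–Selberg L-function `L(s, Π × Π')` has critical points if and only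
if `a_i + b_j ≠ 0` for all `i, j`: for half-integral infinity-type exponents
`a_1 > ... > a_n` (in `ℤ + (n−1)/2`) and `b_1 > ... > b_{n'}` (in `ℤ + (n'−1)/2`),
there exists `s_0 ∈ (n−n')/2 + ℤ` such that `Γ(s_0 + |a_i + b_j|) ≠ 0` and
`Γ(1 − s_0 + |a_i + b_j|) ≠ 0` for all `i, j` (the complex Gamma function
vanishing exactly at its poles, the nonpositive integers), if and only if
`a_i + b_j ≠ 0` for all `1 ≤ i ≤ n`, `1 ≤ j ≤ n'`. -/
theorem exists_critical_point_iff (n n' : ℕ) (hn : 1 ≤ n) (hn' : 1 ≤ n')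
    (a b : ℕ → ℝ)
    (ha : ∀ i, 1 ≤ i → i < n → a (i + 1) < a i)
    (hb : ∀ j, 1 ≤ j → j < n' → b (j + 1) < b j)
    (haz : ∀ i ∈ Finset.Icc 1 n, ∃ k : ℤ, a i = (k : ℝ) + ((n : ℝ) - 1) / 2)
    (hbz : ∀ j ∈ Finset.Icc 1 n', ∃ k : ℤ, b j = (k : ℝ) + ((n' : ℝ) - 1) / 2) :
    (∃ s₀ : ℝ, (∃ k : ℤ, s₀ - ((n : ℝ) - (n' : ℝ)) / 2 = (k : ℝ)) ∧
      ∀ i ∈ Finset.Icc 1 n, ∀ j ∈ Finset.Icc 1 n',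
        Complex.Gamma ((s₀ + |a i + b j| : ℝ) : ℂ) ≠ 0 ∧
        Complex.Gamma ((1 - s₀ + |a i + b j| : ℝ) : ℂ) ≠ 0) ↔
    (∀ i ∈ Finset.Icc 1 n, ∀ j ∈ Finset.Icc 1 n', a i + b j ≠ 0) := by
  constructor
  · rintro ⟨s, ⟨k, hk⟩, h⟩ i hi j hj h0
    obtain ⟨k1, h1⟩ := haz i hi
    obtain ⟨k2, h2⟩ := hbz j hj
    obtain ⟨g1, g2⟩ := h i hi j hj
    have hs : s = ((k + n - 1 + k1 + k2 : ℤ) : ℝ) := by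
      push_cast
      linarith
    generalize (k + n - 1 + k1 + k2 : ℤ) = m at hs
    subst hs
    rw [h0, abs_zero, add_zero] at g1 g2
    rcases le_or_gt m 0 with hm | hm
    · apply g1
      obtain ⟨t, ht⟩ := Int.eq_ofNat_of_zero_le (neg_nonneg.mpr hm)
      rw [Complex.Gamma_eq_zero_iff]
      refine ⟨t, ?_⟩
      have : m = -(t : ℤ) := by omega
      rw [this]
      push_cast
      rfl
    · apply g2
      obtain ⟨t, ht⟩ := Int.eq_ofNat_of_zero_le (show 0 ≤ m - 1 by omega)
      rw [Complex.Gamma_eq_zero_iff]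
      refine ⟨t, ?_⟩
      have : m = (t : ℤ) + 1 := by omega
      rw [this]
      push_cast
      ring
  · intro h
    have key : ∀ x : ℝ, 0 < x → Complex.Gamma (x : ℂ) ≠ 0 := fun x hx =>
      Complex.Gamma_ne_zero_of_re_pos (by simpa using hx)
    rcases Int.even_or_odd' ((n : ℤ) - n') with ⟨c, hc | hc⟩
    · have hc' : (n : ℝ) - n' = 2 * c := by exact_mod_cast hc
      refine ⟨1, ⟨1 - c, ?_⟩, fun i hi j hj => ?_⟩
      · push_cast
        linarith
      · have := abs_pos.mpr (h i hi j hj)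
        exact ⟨key _ (by linarith), key _ (by linarith)⟩
    · have hc' : (n : ℝ) - n' = 2 * c + 1 := by exact_mod_cast hc
      refine ⟨1 / 2, ⟨-c, ?_⟩, fun i hi j hj => ?_⟩
      · push_cast
        linarith
      · have := abs_pos.mpr (h i hi j hj)
        exact ⟨key _ (by linarith), key _ (by linarith)⟩
end

section
/- Let p be a prime, let m ≥ 1, and let Γ = C × D be the direct product of a cyclic group C = ⟨c⟩ of order 2 and a cyclic group D of order m. Let W be a nonzero free module over the group algebra ℚ_p[Γ]. Then there exists a ℚ_p-linear functional λ : W → ℚ_p such that λ(c · w) = −λ(w) for all w ∈ W, and such that λ is stabilized by no non-trivial element of D, i.e. for every d ∈ D with d ≠ 1 there exists w ∈ W with λ(d · w) ≠ λ(w). (This is the key construction in the proof of the paper's Theorem 5 (Theorem BS), applied there to W = W^+ ⊗_{ℤ_p} ℚ_p for the principal units of a local field L.) -/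
/-- General version: `c` an involution of a group `G`, evaluation of a coordinate at `1` minus
evaluation at `c`. -/
theorem exists_functional_aux {K G W : Type*} [Field K] [CharZero K] [Group G]
    [AddCommGroup W] [Module (MonoidAlgebra K G) W] [Module K W]
    [IsScalarTower K (MonoidAlgebra K G) W] [Module.Free (MonoidAlgebra K G) W]
    [Nontrivial W] (c : G) (hcc : c⁻¹ = c) (hc1 : c ≠ 1) :
    ∃ lam : W →ₗ[K] K,
      (∀ w : W, lam ((MonoidAlgebra.single c (1 : K)) • w) = - lam w) ∧
      (∀ e : G, e ≠ 1 → e ≠ c →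
        ∃ w : W, lam ((MonoidAlgebra.single e (1 : K)) • w) ≠ lam w) := by
  classical
  let b := Module.Free.chooseBasis (MonoidAlgebra K G) W
  obtain ⟨i⟩ : Nonempty (Module.Free.ChooseBasisIndex (MonoidAlgebra K G) W) := b.index_nonempty
  have hmul : ∀ (g h : G) (w : W),
      (b.repr ((MonoidAlgebra.single g (1 : K)) • w) i).coeff h
        = (b.repr w i).coeff (g⁻¹ * h) := by
    intro g h w
    rw [map_smul, Finsupp.smul_apply, smul_eq_mul, MonoidAlgebra.coeff_single_mul_apply, one_mul]
  let lam : W →ₗ[K] K :=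
    { toFun := fun w => (b.repr w i).coeff 1 - (b.repr w i).coeff c
      map_add' := by
        intro x y
        simp only [map_add, Finsupp.add_apply, MonoidAlgebra.coeff_add]
        ring
      map_smul' := by
        intro a x
        have h : b.repr (a • x) i = a • b.repr x i := by
          rw [← one_smul (MonoidAlgebra K G) x, ← smul_assoc, map_smul, map_smul,
            Finsupp.smul_apply, Finsupp.smul_apply, smul_assoc, one_smul]
        simp only [h, MonoidAlgebra.coeff_smul, Finsupp.smul_apply, RingHom.id_apply, smul_eq_mul]
        ring }
  have hlam : ∀ w, lam w = (b.repr w i).coeff 1 - (b.repr w i).coeff c := fun _ => rfl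
  refine ⟨lam, ?_, ?_⟩
  · intro w
    rw [hlam, hlam, hmul, hmul, inv_mul_cancel, mul_one, hcc]
    ring
  · intro e he hec
    refine ⟨b i, ?_⟩
    have hone : ∀ g : G, (b.repr (b i) i).coeff g = if g = 1 then 1 else 0 := by
      intro g
      rw [b.repr_self, Finsupp.single_eq_same, MonoidAlgebra.one_def,
        MonoidAlgebra.coeff_single, Finsupp.single_apply]
      simp only [eq_comm]
    have he' : e⁻¹ * 1 ≠ 1 := by
      rwa [mul_one, Ne, inv_eq_one]
    have hec' : e⁻¹ * c ≠ 1 := by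
      rwa [Ne, inv_mul_eq_one]
    rw [hlam, hlam, hmul, hmul, hone, hone, hone, hone, if_neg he', if_neg hec', if_pos rfl,
      if_neg hc1]
    norm_num


/-- Let `Γ = C × D` with `C = ⟨c⟩` cyclic of order 2 and `D` cyclic of order `m`
(realized as `Multiplicative (ZMod 2) × Multiplicative (ZMod m)`), and let `W` be
a nonzero free module over the group algebra `ℚ_p[Γ]`. Then there is a
`ℚ_p`-linear functional `λ : W → ℚ_p` with `λ(c · w) = −λ(w)` for all `w`, which
is stabilized by no non-trivial element of `D`: for every `d ≠ 1` in `D` there is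
`w ∈ W` with `λ(d · w) ≠ λ(w)`. Here the action of a group element `g` on `W` is
via the corresponding element `single g 1` of the group algebra. -/
theorem exists_functional_anti_invariant (p : ℕ) [Fact p.Prime] (m : ℕ) (hm : 1 ≤ m)
    (W : Type*) [AddCommGroup W]
    [Module (MonoidAlgebra ℚ_[p] (Multiplicative (ZMod 2) × Multiplicative (ZMod m))) W]
    [Module ℚ_[p] W]
    [IsScalarTower ℚ_[p]
      (MonoidAlgebra ℚ_[p] (Multiplicative (ZMod 2) × Multiplicative (ZMod m))) W]
    [Module.Free (MonoidAlgebra ℚ_[p] (Multiplicative (ZMod 2) × Multiplicative (ZMod m))) W]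
    (hW : Nontrivial W) :
    ∃ lam : W →ₗ[ℚ_[p]] ℚ_[p],
      (∀ w : W,
        lam ((MonoidAlgebra.single
          ((Multiplicative.ofAdd (1 : ZMod 2), (1 : Multiplicative (ZMod m))) :
            Multiplicative (ZMod 2) × Multiplicative (ZMod m)) (1 : ℚ_[p])) • w)
          = - lam w) ∧
      (∀ d : Multiplicative (ZMod m), d ≠ 1 →
        ∃ w : W,
          lam ((MonoidAlgebra.single
            (((1 : Multiplicative (ZMod 2)), d) :
              Multiplicative (ZMod 2) × Multiplicative (ZMod m)) (1 : ℚ_[p])) • w)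
            ≠ lam w) := by
  have hc : Multiplicative.ofAdd (1 : ZMod 2) ≠ 1 := by decide
  obtain ⟨lam, h1, h2⟩ := exists_functional_aux (K := ℚ_[p]) (W := W)
    ((Multiplicative.ofAdd (1 : ZMod 2), (1 : Multiplicative (ZMod m))) :
      Multiplicative (ZMod 2) × Multiplicative (ZMod m))
    (Prod.ext (by change (Multiplicative.ofAdd (1 : ZMod 2))⁻¹ = Multiplicative.ofAdd (1 : ZMod 2); decide) inv_one)
    (fun h => hc (congrArg Prod.fst h))
  exact ⟨lam, h1, fun d hd => h2 (1, d) (fun h => hd (congrArg Prod.snd h))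
    (fun h => hd (congrArg Prod.snd h))⟩
end

section
/- Let p be a prime, m ≥ 1, Γ = C × D with C = ⟨c⟩ of order 2 and D cyclic of order m, and let W be a nonzero free module over ℚ_p[Γ]. Let ψ : (ℚ_p, +) → ℂ^× be a non-trivial group homomorphism. Then there exists a group homomorphism χ : (W, +) → ℂ^× such that (1) χ(c · w) = χ(w)^{−1} for all w ∈ W, and (2) χ is stabilized by no non-trivial element of D, i.e. for every d ∈ D with d ≠ 1 there exists w ∈ W with χ(d · w) ≠ χ(w). (In the paper, χ is obtained by composing an appropriate ℚ_p-linear functional λ on W, with λ∘c = −λ and trivial D-stabilizer, with the character ψ; the resulting χ is used to build an irreducible conjugate self-dual Galois parameter by induction.) -/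
/-- Let `Γ = C × D` with `C = ⟨c⟩` cyclic of order 2 and `D` cyclic of order `m`
(realized as `Multiplicative (ZMod 2) × Multiplicative (ZMod m)`), let `W` be a
nonzero free module over the group algebra `ℚ_p[Γ]`, and let
`ψ : (ℚ_p, +) → ℂ^×` be a non-trivial group homomorphism (additive character).
Then there exists a group homomorphism `χ : (W, +) → ℂ^×` (additive character of
`W`) such that `χ(c · w) = χ(w)⁻¹` for all `w`, and `χ` is stabilized by no
non-trivial element of `D`: for every `d ≠ 1` in `D` there is `w ∈ W` with
`χ(d · w) ≠ χ(w)`. The action of a group element `g` on `W` is via the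
corresponding element `single g 1` of the group algebra. -/
theorem exists_character_conjugate_selfdual (p : ℕ) [Fact p.Prime] (m : ℕ) (hm : 1 ≤ m)
    (W : Type*) [AddCommGroup W]
    [Module (MonoidAlgebra ℚ_[p] (Multiplicative (ZMod 2) × Multiplicative (ZMod m))) W]
    [Module ℚ_[p] W]
    [IsScalarTower ℚ_[p]
      (MonoidAlgebra ℚ_[p] (Multiplicative (ZMod 2) × Multiplicative (ZMod m))) W]
    [Module.Free (MonoidAlgebra ℚ_[p] (Multiplicative (ZMod 2) × Multiplicative (ZMod m))) W]
    (hW : Nontrivial W)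
    (ψ : AddChar ℚ_[p] ℂˣ) (hψ : ∃ x : ℚ_[p], ψ x ≠ 1) :
    ∃ χ : AddChar W ℂˣ,
      (∀ w : W,
        χ ((MonoidAlgebra.single
          ((Multiplicative.ofAdd (1 : ZMod 2), (1 : Multiplicative (ZMod m))) :
            Multiplicative (ZMod 2) × Multiplicative (ZMod m)) (1 : ℚ_[p])) • w)
          = (χ w)⁻¹) ∧
      (∀ d : Multiplicative (ZMod m), d ≠ 1 →
        ∃ w : W,
          χ ((MonoidAlgebra.single
            (((1 : Multiplicative (ZMod 2)), d) :
              Multiplicative (ZMod 2) × Multiplicative (ZMod m)) (1 : ℚ_[p])) • w)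
            ≠ χ w) := by
  classical
  obtain ⟨x, hx⟩ := hψ
  let G := Multiplicative (ZMod 2) × Multiplicative (ZMod m)
  let A := MonoidAlgebra ℚ_[p] G
  let b := Module.Free.chooseBasis A W
  have hne : Nonempty (Module.Free.ChooseBasisIndex A W) := b.index_nonempty
  obtain ⟨i⟩ := hne
  let c : G := (Multiplicative.ofAdd (1 : ZMod 2), 1)
  have hc1 : c ≠ 1 := by
    intro h
    have h1 : (Multiplicative.ofAdd (1 : ZMod 2)) = 1 := congrArg Prod.fst h
    revert h1
    decide
  have hcc : c⁻¹ = c := by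
    refine Prod.ext ?_ ?_
    · change (Multiplicative.ofAdd (1 : ZMod 2))⁻¹ = Multiplicative.ofAdd (1 : ZMod 2)
      decide
    · exact inv_one
  let L : W →+ ℚ_[p] :=
    { toFun := fun w => (b.repr w i).coeff 1 - (b.repr w i).coeff c
      map_zero' := by simp
      map_add' := by
        intro u v
        have h : ∀ g : G, (b.repr (u + v) i).coeff g
            = (b.repr u i).coeff g + (b.repr v i).coeff g := by
          intro g
          rw [map_add, Finsupp.add_apply]
          rfl
        rw [h, h]
        ring }
  have hL : ∀ w, L w = (b.repr w i).coeff 1 - (b.repr w i).coeff c := fun _ => rfl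
  refine ⟨ψ.compAddMonoidHom L, ?_, ?_⟩
  · intro w
    have key : L ((MonoidAlgebra.single c (1 : ℚ_[p]) : A) • w) = - L w := by
      rw [hL, hL, map_smul, Finsupp.smul_apply, smul_eq_mul,
        MonoidAlgebra.coeff_single_mul_apply, MonoidAlgebra.coeff_single_mul_apply, hcc]
      have : c * c = 1 := by
        nth_rewrite 1 [← hcc]
        exact inv_mul_cancel c
      rw [this, mul_one]
      ring
    change ψ (L ((MonoidAlgebra.single c (1 : ℚ_[p]) : A) • w)) = (ψ (L w))⁻¹
    rw [key, AddChar.map_neg_eq_inv]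
  · intro d hd
    refine ⟨(MonoidAlgebra.single 1 x : A) • b i, ?_⟩
    let e : G := (1, d)
    have he1 : e ≠ 1 := fun h => hd (congrArg Prod.snd h)
    have hec : e ≠ c := by
      intro h
      exact hd (congrArg Prod.snd h)
    have h1 : L ((MonoidAlgebra.single 1 x : A) • b i) = x := by
      rw [hL, map_smul, Finsupp.smul_apply, smul_eq_mul, b.repr_self, Finsupp.single_eq_same,
        mul_one]
      simp [MonoidAlgebra.coeff_single, hc1.symm]
    have h2 : L ((MonoidAlgebra.single e (1 : ℚ_[p]) : A) • (MonoidAlgebra.single 1 x : A) • b i)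
        = 0 := by
      rw [smul_smul, MonoidAlgebra.single_mul_single, hL, map_smul, Finsupp.smul_apply,
        smul_eq_mul, b.repr_self, Finsupp.single_eq_same, mul_one]
      simp [MonoidAlgebra.coeff_single, he1, hec]
    change ψ (L ((MonoidAlgebra.single e (1 : ℚ_[p]) : A) • (MonoidAlgebra.single 1 x : A) • b i))
      ≠ ψ (L ((MonoidAlgebra.single 1 x : A) • b i))
    rw [h1, h2, AddChar.map_zero_eq_one]
    exact hx.symm
end

section
/- Let n ≥ 2 and let A_1 > A_2 > ... > A_n be real numbers with A_i − A_{i+1} ≥ 2 for all 1 ≤ i ≤ n−1. Set n' = n−1, a_i := −A_{n+1−i} for 1 ≤ i ≤ n, and b_j := A_j − 1/2 for 1 ≤ j ≤ n−1. Then: (1) sp(i, a; b) = 1 for 1 ≤ i ≤ n−1 and sp(i, a; b) = 0 for i ∈ {0, n}; and (2) sp(j, b; a) = 1 for all 0 ≤ j ≤ n−1. (This is the paper's computation of the automorphic split indices of the pair (Π, Π') at the archimedean places v ≠ v_0, where A is the Harish-Chandra parameter at v and Π' is the base change of the auxiliary representation π'(q).) -/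
/-- The split index `sp(i, x; y)` for sequences `x` of length `n` and `y` of
length `n'`: the number of indices `1 ≤ j ≤ n'` with `-x (n+1-i) > y j > -x (n-i)`,
with the formal conventions `x 0 = +∞` and `x (n+1) = -∞`. -/
noncomputable def sp (n n' : ℕ) (x y : ℕ → ℝ) (i : ℕ) : ℕ :=
  ((Finset.Icc 1 n').filter
    (fun j => (i = 0 ∨ y j < -x (n + 1 - i)) ∧ (i = n ∨ -x (n - i) < y j))).card

/-- Computation of the automorphic split indices of the pair `(Π, Π')` at an
archimedean place `v ≠ v_0`: with `A_1 > ... > A_n` satisfying `A_i − A_{i+1} ≥ 2`,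
`a_i = −A_{n+1−i}` and `b_j = A_j − 1/2` (for `1 ≤ j ≤ n−1`), one has
`sp(i, a; b) = 1` for `1 ≤ i ≤ n−1`, `sp(0, a; b) = sp(n, a; b) = 0`, and
`sp(j, b; a) = 1` for all `0 ≤ j ≤ n−1`. -/
theorem split_indices_at_other_places (n : ℕ) (hn : 2 ≤ n) (A : ℕ → ℝ)
    (hdec : ∀ i, 1 ≤ i → i < n → A (i + 1) < A i)
    (hgap : ∀ i, 1 ≤ i → i + 1 ≤ n → A i - A (i + 1) ≥ 2) :
    (∀ i, 1 ≤ i → i ≤ n - 1 →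
        sp n (n - 1) (fun k => -A (n + 1 - k)) (fun j => A j - 1 / 2) i = 1) ∧
    sp n (n - 1) (fun k => -A (n + 1 - k)) (fun j => A j - 1 / 2) 0 = 0 ∧
    sp n (n - 1) (fun k => -A (n + 1 - k)) (fun j => A j - 1 / 2) n = 0 ∧
    (∀ j, j ≤ n - 1 →
        sp (n - 1) n (fun j => A j - 1 / 2) (fun k => -A (n + 1 - k)) j = 1) := by
  have key : ∀ i j, 1 ≤ i → i < j → j ≤ n → A j + 2 ≤ A i := by
    intro i j hi hij
    induction j, hij using Nat.le_induction with
    | base =>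
      intro hj
      have := hgap i hi hj
      simp only [Nat.succ_eq_add_one] at *
      linarith
    | succ k hk ih =>
      intro hj
      have h1 := ih (by omega)
      have h2 := hgap k (by omega) hj
      linarith
  refine ⟨?_, ?_, ?_, ?_⟩
  · intro i hi hin
    unfold sp
    rw [Finset.card_eq_one]
    refine ⟨i, ?_⟩
    ext j
    have e1 : n + 1 - (n + 1 - i) = i := by omega
    have e2 : n + 1 - (n - i) = i + 1 := by omega
    simp only [Finset.mem_filter, Finset.mem_Icc, Finset.mem_singleton, e1, e2, neg_neg]
    constructor
    · rintro ⟨⟨hj1, hj2⟩, h1, h2⟩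
      have h1 := h1.resolve_left (by omega)
      have h2 := h2.resolve_left (by omega)
      rcases lt_trichotomy j i with h | h | h
      · have := key j i hj1 h (by omega)
        linarith
      · exact h
      · rcases Nat.lt_or_ge (i + 1) j with h' | h'
        · have := key (i + 1) j (by omega) h' (by omega)
          linarith
        · have : j = i + 1 := by omega
          subst this
          linarith
    · rintro rfl
      have := key j (j + 1) hi (by omega) (by omega)
      exact ⟨⟨hi, hin⟩, Or.inr (by linarith), Or.inr (by linarith)⟩
  · unfold sp
    rw [Finset.card_eq_zero, Finset.filter_eq_empty_iff]
    intro j hj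
    rw [Finset.mem_Icc] at hj
    have e2 : n + 1 - (n - 0) = 1 := by omega
    simp only [e2, neg_neg]
    rintro ⟨-, h2⟩
    have h2 := h2.resolve_left (by omega)
    rcases Nat.lt_or_ge 1 j with h' | h'
    · have := key 1 j (by omega) h' (by omega)
      linarith
    · have : j = 1 := by omega
      subst this
      linarith
  · unfold sp
    rw [Finset.card_eq_zero, Finset.filter_eq_empty_iff]
    intro j hj
    rw [Finset.mem_Icc] at hj
    have e1 : n + 1 - (n + 1 - n) = n := by omega
    simp only [e1, neg_neg]
    rintro ⟨h1, -⟩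
    have h1 := h1.resolve_left (by omega)
    have := key j n (by omega) (by omega) le_rfl
    linarith
  · intro j hj
    unfold sp
    rw [Finset.card_eq_one]
    refine ⟨j + 1, ?_⟩
    ext k
    have e1 : n - 1 + 1 - j = n - j := by omega
    simp only [Finset.mem_filter, Finset.mem_Icc, Finset.mem_singleton, e1]
    constructor
    · rintro ⟨⟨hk1, hk2⟩, h1, h2⟩
      rcases lt_trichotomy k (j + 1) with h | h | h
      · have h1 := h1.resolve_left (by omega)
        have := key (n - j) (n + 1 - k) (by omega) (by omega) (by omega)
        linarith
      · exact h
      · have h2 := h2.resolve_left (by omega)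
        rcases Nat.lt_or_ge (n + 1 - k) (n - 1 - j) with h' | h'
        · have := key (n + 1 - k) (n - 1 - j) (by omega) h' (by omega)
          linarith
        · have e : n + 1 - k = n - 1 - j := by omega
          rw [e] at h2
          linarith
    · rintro rfl
      have e : n + 1 - (j + 1) = n - j := by omega
      rw [e]
      refine ⟨⟨by omega, by omega⟩, Or.inr (by linarith), ?_⟩
      by_cases hjn : j = n - 1
      · exact Or.inl hjn
      · have := key (n - 1 - j) (n - j) (by omega) (by omega) (by omega)
        exact Or.inr (by linarith)
end
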